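/- arXiv:2411.09048 — 3 statements merged into one kernel-verified Lean document; each statement's English description precedes it below -/
import Mathlib

section
/- Let κ be an infinite cardinal, d a set of ordinals with κ ∈ d, and f : d → κ a function. Call a function μ suitable for (f, d, κ) if: κ ∈ dom(μ) ⊆ d; every value of μ is an ordinal below κ; the set {α ∈ dom(μ) : α < κ} is exactly the set of ordinals below μ(κ); μ(α) = α for every α < μ(κ); and μ(α) > f(α) for every α ∈ dom(μ) with α ≥ μ(κ). For suitable μ define f ⊕ μ : d → Ord by (f ⊕ μ)(x) = μ(x) if x ∈ dom(μ) and (f ⊕ μ)(x) = f(x) otherwise. Then for any two functions μ, ν suitable for (f, d, κ): if f ⊕ μ = f ⊕ ν, then dom(μ) = dom(ν) and μ = ν. -/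
/-- A partial function `μ` (with domain `dom`) is *suitable* for `(f, d, κ)`:
`κ ∈ dom ⊆ d`, all values of `μ` are below `κ`, the part of `dom` below `κ` is exactly
the set of ordinals below `μ κ`, `μ` is the identity below `μ κ`, and `μ α > f α` for
all `α ∈ dom` with `α ≥ μ κ`. -/
structure Suitable (κo : Ordinal) (d : Set Ordinal) (f : Ordinal → Ordinal)
    (dom : Set Ordinal) (μ : Ordinal → Ordinal) : Prop where
  mem_dom : κo ∈ dom
  dom_sub : dom ⊆ d
  val_lt : ∀ α ∈ dom, μ α < κo
  dom_below : ∀ α, (α ∈ dom ∧ α < κo) ↔ α < μ κo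
  id_below : ∀ α < μ κo, μ α = α
  gt_f : ∀ α ∈ dom, μ κo ≤ α → f α < μ α

open Classical in
/-- The merge `f ⊕ μ` of `f` with the partial function `μ`. -/
noncomputable def oplus (f : Ordinal → Ordinal) (dom : Set Ordinal)
    (μ : Ordinal → Ordinal) (x : Ordinal) : Ordinal :=
  if x ∈ dom then μ x else f x

/-- for suitable partial functions `μ, ν`, if `f ⊕ μ = f ⊕ ν` (on `d`),
then `μ` and `ν` have the same domain and agree on it. -/
theorem oplus_injective (κ : Cardinal) (hκ : Cardinal.aleph0 ≤ κ)
    (d : Set Ordinal) (hκd : κ.ord ∈ d)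
    (f : Ordinal → Ordinal) (hf : ∀ x ∈ d, f x < κ.ord)
    (domμ domν : Set Ordinal) (μ ν : Ordinal → Ordinal)
    (hμ : Suitable κ.ord d f domμ μ) (hν : Suitable κ.ord d f domν ν)
    (heq : ∀ x ∈ d, oplus f domμ μ x = oplus f domν ν x) :
    domμ = domν ∧ ∀ x ∈ domμ, μ x = ν x := by
  have hk : μ κ.ord = ν κ.ord := by
    have h := heq _ hκd
    simpa [oplus, hμ.mem_dom, hν.mem_dom] using h
  have key : ∀ (A B : Set Ordinal) (a b : Ordinal → Ordinal), Suitable κ.ord d f A a →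
      Suitable κ.ord d f B b → a κ.ord = b κ.ord →
      (∀ x ∈ d, oplus f A a x = oplus f B b x) → A ⊆ B := by
    intro A B a b ha hb hab h x hx
    by_contra hxB
    have h1 := h x (ha.dom_sub hx)
    simp only [oplus, hx, hxB, if_true, if_false] at h1
    rcases lt_or_ge x (a κ.ord) with hlt | hge
    · exact hxB ((hb.dom_below x).2 (hab ▸ hlt)).1
    · exact absurd h1 (ha.gt_f x hx hge).ne'
  have hd : domμ = domν := Set.Subset.antisymm (key _ _ _ _ hμ hν hk heq)
    (key _ _ _ _ hν hμ hk.symm fun x hx => (heq x hx).symm)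
  refine ⟨hd, fun x hx => ?_⟩
  have h1 := heq x (hμ.dom_sub hx)
  have hx2 : x ∈ domν := hd ▸ hx
  simpa only [oplus, hx, hx2, if_true] using h1
end

section
/- Let λ be a regular uncountable cardinal, (D, ≤) a preorder, G ⊆ D a nonempty downward-directed subset with |G| < λ, α an ordinal, and ⟨S_i : i ≤ α⟩ a sequence of functions from D into subsets of λ such that for all d, e ∈ D and all i: (a) each S_i(d) is a closed bounded subset of λ and S_0(d) = ∅; (b) if e ≤ d then S_i(d) ⊆ S_i(e); (c) S_i(d) ⊑ S_{i+1}(d) for i < α; (d) if e ≤ d and i < α then S_{i+1}(d) ∖ S_i(d) ⊑ S_{i+1}(e) ∖ S_i(e); (e) for limit i ≤ α, S_i(d) is the closure of ⋃_{j<i} S_j(d). For i ≤ α put C_i = cl(⋃_{d ∈ G} S_i(d)), the closure taken in the order topology of λ. Then C_i ⊑ C_j whenever i ≤ j ≤ α. -/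
/-- `t` end-extends `s` (`s ⊑ t`): `s ⊆ t` and every element of `t` not in `s` is
strictly above all elements of `s` (equivalently, for nonempty closed `s`,
`t ∩ (sup s + 1) = s`; in particular `∅ ⊑ t` always). -/
def SqSub (s t : Set Ordinal) : Prop :=
  s ⊆ t ∧ ∀ x ∈ t, x ∉ s → ∀ y ∈ s, y < x

/-- `s` is a closed bounded subset of the ordinal `lam`. -/
def ClosedBddIn (lam : Ordinal) (s : Set Ordinal) : Prop :=
  s ⊆ Set.Iio lam ∧ sSup s < lam ∧
    ∀ γ < lam, γ ≠ 0 → sSup (s ∩ Set.Iio γ) = γ → γ ∈ s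

/-- The closure of `A` in the order topology of the ordinal `lam`:
`A` together with all of its limit points below `lam`. -/
def clIn (lam : Ordinal) (A : Set Ordinal) : Set Ordinal :=
  A ∪ {γ | γ < lam ∧ γ ≠ 0 ∧ sSup (A ∩ Set.Iio γ) = γ}

universe u

theorem lim_iff_aux (A : Set Ordinal.{u}) (γ : Ordinal.{u}) (h : γ ≠ 0) :
    sSup (A ∩ Set.Iio γ) = γ ↔ ∀ β < γ, ∃ a ∈ A, β < a ∧ a < γ := by
  have hbd : BddAbove (A ∩ Set.Iio γ) := ⟨γ, fun a ha => le_of_lt ha.2⟩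
  constructor
  · intro hs β hβ
    have hne : (A ∩ Set.Iio γ).Nonempty := by
      by_contra hn
      rw [Set.not_nonempty_iff_eq_empty] at hn
      rw [hn] at hs
      apply h
      rw [← hs]
      simp
    rw [← hs] at hβ
    obtain ⟨a, ha, hlt⟩ := exists_lt_of_lt_csSup hne hβ
    exact ⟨a, ha.1, hlt, ha.2⟩
  · intro hs
    apply le_antisymm
    · exact csSup_le' (fun a ha => le_of_lt ha.2)
    · apply le_of_forall_lt
      intro β hβ
      obtain ⟨a, ha, h1, h2⟩ := hs β hβ
      exact lt_of_lt_of_le h1 (le_csSup hbd ⟨ha, h2⟩)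

theorem mem_cl_aux (l : Ordinal.{u}) (A : Set Ordinal.{u}) (γ : Ordinal.{u}) :
    γ ∈ clIn l A ↔ γ ∈ A ∨ (γ < l ∧ γ ≠ 0 ∧ ∀ β < γ, ∃ a ∈ A, β < a ∧ a < γ) := by
  constructor
  · rintro (h | ⟨h1, h2, h3⟩)
    · exact Or.inl h
    · exact Or.inr ⟨h1, h2, (lim_iff_aux A γ h2).1 h3⟩
  · rintro (h | ⟨h1, h2, h3⟩)
    · exact Or.inl h
    · exact Or.inr ⟨h1, h2, (lim_iff_aux A γ h2).2 h3⟩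

theorem cl_sq_aux (l : Ordinal.{u}) (A B : Set Ordinal.{u}) (h : SqSub A B) :
    SqSub (clIn l A) (clIn l B) := by
  obtain ⟨hAB, hlt⟩ := h
  have key : ∀ x ∈ B, x ∉ clIn l A → ∀ y ∈ clIn l A, y < x := by
    intro x hx hxA y hy
    have hxA' : x ∉ A := fun h => hxA (Or.inl h)
    by_contra hxy
    rcases lt_or_eq_of_le (not_lt.1 hxy) with h | h
    · rcases (mem_cl_aux _ _ _).1 hy with hy | ⟨-, -, hy⟩
      · exact hxy (hlt x hx hxA' y hy)
      · obtain ⟨a, ha, h1, -⟩ := hy x h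
        exact lt_asymm h1 (hlt x hx hxA' a ha)
    · exact hxA (h ▸ hy)
  refine ⟨?_, ?_⟩
  · intro x hx
    rw [mem_cl_aux] at hx ⊢
    rcases hx with hx | ⟨h1, h2, h3⟩
    · exact Or.inl (hAB hx)
    · refine Or.inr ⟨h1, h2, fun β hβ => ?_⟩
      obtain ⟨a, ha, h⟩ := h3 β hβ
      exact ⟨a, hAB ha, h⟩
  · intro x hx hxA y hy
    rcases (mem_cl_aux _ _ _).1 hx with hx | ⟨h1, h2, h3⟩
    · exact key x hx hxA y hy
    · have hn : ¬ ∀ β < x, ∃ a ∈ A, β < a ∧ a < x := fun h =>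
        hxA ((mem_cl_aux _ _ _).2 (Or.inr ⟨h1, h2, h⟩))
      push Not at hn
      obtain ⟨β, hβ, hn⟩ := hn
      obtain ⟨b, hb, hb1, hb2⟩ := h3 β hβ
      refine lt_trans (key b hb ?_ y hy) hb2
      intro hbA
      rcases (mem_cl_aux _ _ _).1 hbA with hbA | ⟨-, -, hbA⟩
      · exact absurd hb2 (not_lt.2 (hn b hbA hb1))
      · obtain ⟨a, ha, h4, h5⟩ := hbA β hb1
        exact absurd (h5.trans hb2) (not_lt.2 (hn a ha h4))

theorem sq_trans_aux {A B C : Set Ordinal.{u}} (h : SqSub A B) (h' : SqSub B C) :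
    SqSub A C := by
  refine ⟨h.1.trans h'.1, fun x hx hxA y hy => ?_⟩
  by_cases hB : x ∈ B
  · exact h.2 x hB hxA y hy
  · exact h'.2 x hx hB y (h.1 hy)

theorem sq_refl_aux (A : Set Ordinal.{u}) : SqSub A A :=
  ⟨subset_rfl, fun _ hx hxA => absurd hx hxA⟩

/-- for a sequence of "labeled-block" functions `S i : D → Set Ordinal`
(`i ≤ α`) satisfying clauses (a)–(e) of the definition of a strategy, and a nonempty
downward-directed `G ⊆ D` of size `< λ` (`λ` regular uncountable), the closed sets
`C i = cl (⋃_{d ∈ G} S i d)` satisfy `C i ⊑ C j` whenever `i ≤ j ≤ α`. -/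
theorem strategy_clubs_end_extend {D : Type u} [Preorder D] (lam : Cardinal.{u})
    (hreg : lam.IsRegular) (hunc : Cardinal.aleph0 < lam)
    (G : Set D) (hGne : G.Nonempty)
    (hGdir : ∀ d ∈ G, ∀ e ∈ G, ∃ f ∈ G, f ≤ d ∧ f ≤ e)
    (hGcard : Cardinal.mk G < lam)
    (α : Ordinal.{u}) (S : Ordinal.{u} → D → Set Ordinal.{u})
    (ha : ∀ i ≤ α, ∀ d : D, ClosedBddIn lam.ord (S i d))
    (h0 : ∀ d : D, S 0 d = ∅)
    (hb : ∀ i ≤ α, ∀ d e : D, e ≤ d → S i d ⊆ S i e)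
    (hc : ∀ i < α, ∀ d : D, SqSub (S i d) (S (i + 1) d))
    (hd : ∀ i < α, ∀ d e : D, e ≤ d → SqSub (S (i + 1) d \ S i d) (S (i + 1) e \ S i e))
    (he : ∀ i ≤ α, Order.IsSuccLimit i → ∀ d : D, S i d = clIn lam.ord (⋃ j ∈ Set.Iio i, S j d)) :
    ∀ i j : Ordinal, i ≤ j → j ≤ α →
      SqSub (clIn lam.ord (⋃ d ∈ G, S i d)) (clIn lam.ord (⋃ d ∈ G, S j d)) := by
  have main : ∀ d : D, ∀ j : Ordinal.{u}, j ≤ α → ∀ i ≤ j, SqSub (S i d) (S j d) := by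
    intro d j
    induction j using Ordinal.limitRecOn with
    | zero =>
      intro _ i hi
      rw [nonpos_iff_eq_zero.1 hi]
      exact sq_refl_aux _
    | add_one k ih =>
      intro hk i hi
      have hk' : k < α := Order.add_one_le_iff.1 hk
      rcases lt_or_eq_of_le hi with h | h
      · exact sq_trans_aux (ih hk'.le i (Order.lt_add_one_iff.1 h)) (hc k hk' d)
      · rw [h]
        exact sq_refl_aux _
    | limit j hj ih =>
      intro hjα i hi
      rcases lt_or_eq_of_le hi with h | h
      · have hcl : clIn lam.ord (S i d) = S i d := by
          apply Set.Subset.antisymm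
          · rintro x (hx | ⟨h1, h2, h3⟩)
            · exact hx
            · exact (ha i (hi.trans hjα) d).2.2 x h1 h2 h3
          · exact fun x hx => Or.inl hx
        rw [he j hjα hj d, ← hcl]
        apply cl_sq_aux
        refine ⟨Set.subset_biUnion_of_mem (u := fun j => S j d) h, ?_⟩
        intro x hx hxi y hy
        simp only [Set.mem_iUnion] at hx
        obtain ⟨k, hk, hx⟩ := hx
        have hk : k < j := hk
        rcases le_total k i with hki | hik
        · exact absurd ((ih i h (hi.trans hjα) k hki).1 hx) hxi
        · exact (ih k hk (hk.le.trans hjα) i hik).2 x hx hxi y hy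
      · rw [h]
        exact sq_refl_aux _
  intro i j hij hj
  apply cl_sq_aux
  refine ⟨Set.iUnion₂_mono fun d _ => (main d j hj i hij).1, ?_⟩
  intro x hx hxi y hy
  simp only [Set.mem_iUnion, not_exists] at hx hxi hy
  obtain ⟨d, hdG, hx⟩ := hx
  obtain ⟨e, heG, hy⟩ := hy
  obtain ⟨f, hfG, hfd, hfe⟩ := hGdir d hdG e heG
  exact (main f j hj i hij).2 x (hb j hj d f hfd hx) (hxi f hfG) y
    (hb i (hij.trans hj) e f hfe hy)
end

section
/- Let λ be a regular uncountable cardinal, (D, ≤) a preorder, G ⊆ D a nonempty downward-directed subset with |G| < λ, α an ordinal, and ⟨S_i : i ≤ α⟩ a sequence of functions from D into subsets of λ such that for all d, e ∈ D and all i: (a) each S_i(d) is a closed bounded subset of λ, S_0(d) = ∅, and S_i(d) ≠ ∅ for 1 ≤ i ≤ α; (b) if e ≤ d then S_i(d) ⊆ S_i(e); (c) S_i(d) ⊑ S_{i+1}(d) for i < α; (d) if e ≤ d and i < α then S_{i+1}(d) ∖ S_i(d) ⊑ S_{i+1}(e) ∖ S_i(e); (e) for limit i ≤ α, S_i(d)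 is the closure of ⋃_{j<i} S_j(d). Then for every ξ ≤ α, the closure C_ξ = cl(⋃_{d∈G} S_ξ(d)) in the order topology of λ equals ⋃_{d ∈ G} S_ξ(d) ∪ { sup_{d ∈ G} (max S_η(d)) : 1 ≤ η ≤ ξ }; that is, passing to the closure adds exactly the suprema over G of the maxima of the blocks at the levels η ≤ ξ. -/
universe u

theorem sup_iff_aux (A : Set Ordinal) (γ : Ordinal) (hγ : γ ≠ 0) :
    sSup (A ∩ Set.Iio γ) = γ ↔ ∀ β < γ, ∃ x ∈ A, β < x ∧ x < γ := by
  have hbdd : BddAbove (A ∩ Set.Iio γ) := ⟨γ, fun x hx => le_of_lt hx.2⟩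
  constructor
  · intro h β hβ
    have hn : (A ∩ Set.Iio γ).Nonempty := by
      by_contra hn
      rw [Set.not_nonempty_iff_eq_empty] at hn
      rw [hn] at h
      simp at h
      exact hγ h.symm
    rw [← h] at hβ
    obtain ⟨x, hx, hlt⟩ := exists_lt_of_lt_csSup hn hβ
    exact ⟨x, hx.1, hlt, hx.2⟩
  · intro h
    apply le_antisymm
    · exact csSup_le' (fun x hx => le_of_lt hx.2)
    · by_contra hlt
      push Not at hlt
      obtain ⟨x, hx, h1, h2⟩ := h _ hlt
      exact absurd (le_csSup hbdd ⟨hx, h2⟩) (not_le.2 h1)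

theorem sSup_mem_aux {lam : Ordinal} {s : Set Ordinal} (h : ClosedBddIn lam s)
    (hs : s.Nonempty) : sSup s ∈ s := by
  have hbdd : BddAbove s := ⟨lam, fun x hx => le_of_lt (h.1 hx)⟩
  by_contra hn
  have hlt : ∀ x ∈ s, x < sSup s := fun x hx =>
    lt_of_le_of_ne (le_csSup hbdd hx) (fun e => hn (e ▸ hx))
  obtain ⟨x, hx⟩ := hs
  have h0 : sSup s ≠ 0 := fun e => by
    have := hlt x hx
    rw [e] at this
    exact absurd this (not_lt.2 (bot_le))
  have he : s ∩ Set.Iio (sSup s) = s := Set.inter_eq_left.2 hlt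
  exact hn (h.2.2 _ h.2.1 h0 (by rw [he]))

/-- under clauses (a)–(e) of the definition of a strategy (with the blocks
nonempty at levels `1 ≤ i ≤ α`), for every `ξ ≤ α` the closure of `⋃_{d ∈ G} S ξ d`
equals the union itself together with the suprema, over `d ∈ G`, of the maxima
(`= sSup`, since the blocks are closed bounded nonempty) of the blocks at the levels
`1 ≤ η ≤ ξ`. -/
theorem strategy_clubs_closure_eq {D : Type u} [Preorder D] (lam : Cardinal.{u})
    (hreg : lam.IsRegular) (hunc : Cardinal.aleph0 < lam)
    (G : Set D) (hGne : G.Nonempty)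
    (hGdir : ∀ d ∈ G, ∀ e ∈ G, ∃ f ∈ G, f ≤ d ∧ f ≤ e)
    (hGcard : Cardinal.mk G < lam)
    (α : Ordinal.{u}) (S : Ordinal.{u} → D → Set Ordinal.{u})
    (ha : ∀ i ≤ α, ∀ d : D, ClosedBddIn lam.ord (S i d))
    (h0 : ∀ d : D, S 0 d = ∅)
    (hne : ∀ i : Ordinal, 1 ≤ i → i ≤ α → ∀ d : D, (S i d).Nonempty)
    (hb : ∀ i ≤ α, ∀ d e : D, e ≤ d → S i d ⊆ S i e)
    (hc : ∀ i < α, ∀ d : D, SqSub (S i d) (S (i + 1) d))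
    (hd : ∀ i < α, ∀ d e : D, e ≤ d → SqSub (S (i + 1) d \ S i d) (S (i + 1) e \ S i e))
    (he : ∀ i ≤ α, Order.IsSuccLimit i → ∀ d : D, S i d = clIn lam.ord (⋃ j ∈ Set.Iio i, S j d)) :
    ∀ ξ ≤ α, clIn lam.ord (⋃ d ∈ G, S ξ d) =
      (⋃ d ∈ G, S ξ d) ∪
        ⋃ η ∈ Set.Icc (1 : Ordinal) ξ, {sSup ((fun d => sSup (S η d)) '' G)} := by
  have sq_use : ∀ {s t : Set Ordinal.{u}}, SqSub s t → ∀ {x y}, x ∈ t → y ∈ s → x ≤ y → x ∈ s := by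
    intro s t h x y hx hy hxy
    by_contra hn
    exact absurd (h.2 x hx hn y hy) (not_lt.2 hxy)
  -- monotonicity in the level
  have mono : ∀ j ≤ α, ∀ i ≤ j, ∀ d, SqSub (S i d) (S j d) := by
    intro j
    induction j using WellFoundedLT.induction with
    | ind j ih =>
      intro hj i hij d
      rcases hij.eq_or_lt with rfl | hij
      · exact ⟨subset_rfl, fun x hx hn => absurd hx hn⟩
      rcases Ordinal.zero_or_succ_or_isSuccLimit j with rfl | ⟨k, rfl⟩ | hl
      · exact absurd hij (not_lt.2 (bot_le))
      · have hk : k < Order.succ k := Order.lt_succ k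
        have hka : k < α := hk.trans_le hj
        have h1 := ih k hk hka.le i (Order.lt_succ_iff.1 hij) d
        have h2 := hc k hka d
        rw [← Order.succ_eq_add_one] at h2
        refine ⟨h1.1.trans h2.1, fun x hx hn y hy => ?_⟩
        by_cases hxk : x ∈ S k d
        · exact h1.2 x hxk hn y hy
        · exact h2.2 x hx hxk y (h1.1 hy)
      · have hsub : ∀ k < j, S k d ⊆ ⋃ j' ∈ Set.Iio j, S j' d := fun k hk x hx =>
          Set.mem_biUnion (show k ∈ Set.Iio j from hk) hx
        have hin : ∀ x y, x ∈ ⋃ j' ∈ Set.Iio j, S j' d → y ∈ S i d → x ≤ y → x ∈ S i d := by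
          intro x y hx hy hxy
          simp only [Set.mem_iUnion] at hx
          obtain ⟨k, hk, hx⟩ := hx
          have hk : k < j := hk
          rcases le_total i k with hik | hki
          · exact sq_use (ih k hk (hk.le.trans hj) i hik d) hx hy hxy
          · exact (ih i hij (hij.le.trans hj) k hki d).1 hx
        rw [he j hj hl d]
        refine ⟨(hsub i hij).trans Set.subset_union_left, fun x hx hn y hy => ?_⟩
        by_contra hlt
        push Not at hlt
        rcases hx with hx | ⟨hxl, hx0, hx⟩
        · exact hn (hin x y hx hy hlt)
        · apply hn
          apply (ha i (hij.le.trans hj) d).2.2 x hxl hx0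
          rw [sup_iff_aux _ _ hx0] at hx ⊢
          intro β hβ
          obtain ⟨z, hz, h1, h2⟩ := hx β hβ
          exact ⟨z, hin z y hz hy (h2.le.trans hlt), h1, h2⟩
  intro ξ hξ
  have hSbdd : ∀ i ≤ α, ∀ d, BddAbove (S i d) := fun i hi d =>
    ⟨lam.ord, fun x hx => le_of_lt ((ha i hi d).1 hx)⟩
  have hIbdd : ∀ η ≤ α, BddAbove ((fun d => sSup (S η d)) '' G) := by
    rintro η hη
    refine ⟨lam.ord, ?_⟩
    rintro _ ⟨d, -, rfl⟩
    exact (ha η hη d).2.1.le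
  have hIlt : ∀ η ≤ α, sSup ((fun d => sSup (S η d)) '' G) < lam.ord := by
    intro η hη
    rw [sSup_image']
    apply Ordinal.iSup_lt_of_lt_cof
    · rwa [hreg.cof_ord]
    · exact fun i => (ha η hη i).2.1
  apply Set.Subset.antisymm
  · rintro γ (hγ | ⟨hγl, hγ0, hγ⟩)
    · exact Or.inl hγ
    by_cases hmem : γ ∈ ⋃ d ∈ G, S ξ d
    · exact Or.inl hmem
    right
    rw [sup_iff_aux _ _ hγ0] at hγ
    let P : Ordinal.{u} → Prop := fun η => η ≤ ξ ∧
      ∀ β < γ, ∃ x ∈ ⋃ d ∈ G, S η d, β < x ∧ x < γ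
    obtain ⟨η, ⟨hηξ, hη⟩, hmin⟩ : ∃ η, P η ∧ ∀ j < η, ¬ P j := by
      have hex : ∃ η, P η := ⟨ξ, le_rfl, hγ⟩
      exact ⟨_, WellFounded.min_mem wellFounded_lt {η | P η} hex,
        fun j hj hP => WellFounded.not_lt_min wellFounded_lt {η | P η} hP hj⟩
    have hηα := hηξ.trans hξ
    have hnotS : ∀ d ∈ G, γ ∉ S η d := fun d hdG h =>
      hmem (Set.mem_biUnion hdG ((mono ξ hξ η hηξ d).1 h))
    -- no lower level reaches above γ
    have key : ∀ j < η, ∀ d ∈ G, ∀ y ∈ S j d, ¬ γ < y := by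
      intro j hj d hdG y hy hlt
      refine hmin j hj ⟨hj.le.trans hηξ, fun β hβ => ?_⟩
      obtain ⟨x, hx, h1, h2⟩ := hη β hβ
      simp only [Set.mem_iUnion] at hx
      obtain ⟨e, heG, hx⟩ := hx
      obtain ⟨f, hfG, hfd, hfe⟩ := hGdir d hdG e heG
      exact ⟨x, Set.mem_biUnion hfG (sq_use (mono η hηα j hj.le f) (hb η hηα e f hfe hx)
        (hb j (hj.le.trans hηα) d f hfd hy) (h2.trans hlt).le), h1, h2⟩
    have key2 : ∀ d ∈ G, ∀ y ∈ S η d, y ≤ γ := by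
      intro d hdG y hy
      by_contra hlt
      push Not at hlt
      rcases Ordinal.zero_or_succ_or_isSuccLimit η with rfl | ⟨i, rfl⟩ | hl
      · rw [h0] at hy
        exact hy
      · have hi : i < Order.succ i := Order.lt_succ i
        have hyn : y ∉ S i d := fun h => key i hi d hdG y h hlt
        have hnP := hmin i hi
        have : ∃ β < γ, ∀ x ∈ ⋃ d ∈ G, S i d, β < x → γ ≤ x := by
          by_contra hcon
          push Not at hcon
          exact hnP ⟨hi.le.trans hηξ, hcon⟩
        obtain ⟨β, hβ, hβ2⟩ := this
        apply hnotS d hdG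
        apply (ha _ hηα d).2.2 γ hγl hγ0
        rw [sup_iff_aux _ _ hγ0]
        intro δ hδ
        obtain ⟨x, hx, h1, h2⟩ := hη (max β δ) (max_lt hβ hδ)
        simp only [Set.mem_iUnion] at hx
        obtain ⟨e, heG, hx⟩ := hx
        obtain ⟨f, hfG, hfd, hfe⟩ := hGdir d hdG e heG
        have hxf := hb _ hηα e f hfe hx
        have hxn : x ∉ S i f := fun h => absurd
          (hβ2 x (Set.mem_biUnion hfG h) ((le_max_left _ _).trans_lt h1)) (not_le.2 h2)
        have hdd := hd i (hi.trans_le hηα) d f hfd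
        rw [← Order.succ_eq_add_one] at hdd
        exact ⟨x, (sq_use hdd ⟨hxf, hxn⟩ ⟨hy, hyn⟩ (h2.trans hlt).le).1,
          (le_max_right _ _).trans_lt h1, h2⟩
      · have : ∃ z ∈ ⋃ j ∈ Set.Iio η, S j d, γ < z := by
          rw [he η hηα hl d] at hy
          rcases hy with hy | ⟨hyl, hy0, hy⟩
          · exact ⟨y, hy, hlt⟩
          · rw [sup_iff_aux _ _ hy0] at hy
            obtain ⟨z, hz, h1, -⟩ := hy γ hlt
            exact ⟨z, hz, h1⟩
        obtain ⟨z, hz, hlt⟩ := this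
        simp only [Set.mem_iUnion] at hz
        obtain ⟨j, hj, hz⟩ := hz
        exact key j hj d hdG z hz hlt
    have hη1 : 1 ≤ η := by
      rw [Ordinal.one_le_iff_ne_zero]
      rintro rfl
      obtain ⟨x, hx, -⟩ := hη 0 (pos_iff_ne_zero.2 hγ0)
      simp [h0] at hx
    refine Set.mem_biUnion (show η ∈ Set.Icc 1 ξ from ⟨hη1, hηξ⟩) ?_
    rw [Set.mem_singleton_iff]
    apply le_antisymm
    · by_contra hlt
      push Not at hlt
      obtain ⟨x, hx, h1, h2⟩ := hη _ hlt
      simp only [Set.mem_iUnion] at hx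
      obtain ⟨e, heG, hx⟩ := hx
      have h3 : x ≤ sSup (S η e) := le_csSup (hSbdd η hηα e) hx
      have h4 := le_csSup (hIbdd η hηα) (Set.mem_image_of_mem (fun d => sSup (S η d)) heG)
      exact absurd (h3.trans h4) (not_le.2 h1)
    · apply csSup_le'
      rintro _ ⟨d, hdG, rfl⟩
      exact csSup_le' (fun y hy => key2 d hdG y hy)
  · rintro γ (hγ | hγ)
    · exact Or.inl hγ
    simp only [Set.mem_iUnion, Set.mem_singleton_iff] at hγ
    obtain ⟨η, ⟨hη1, hηξ⟩, rfl⟩ := hγ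
    have hηα := hηξ.trans hξ
    have hm : ∀ d ∈ G, sSup (S η d) ∈ ⋃ d ∈ G, S ξ d := fun d hdG =>
      Set.mem_biUnion hdG ((mono ξ hξ η hηξ d).1 (sSup_mem_aux (ha η hηα d) (hne η hη1 hηα d)))
    by_cases hat : ∃ d ∈ G, sSup (S η d) = sSup ((fun d => sSup (S η d)) '' G)
    · obtain ⟨d, hdG, h⟩ := hat
      rw [← h]
      exact Or.inl (hm d hdG)
    push Not at hat
    have hlt : ∀ d ∈ G, sSup (S η d) < sSup ((fun d => sSup (S η d)) '' G) := fun d hdG =>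
      lt_of_le_of_ne (le_csSup (hIbdd η hηα) (Set.mem_image_of_mem (fun d => sSup (S η d)) hdG))
        (hat d hdG)
    obtain ⟨d0, hd0⟩ := hGne
    have hγ0 : sSup ((fun d => sSup (S η d)) '' G) ≠ 0 :=
      pos_iff_ne_zero.1 ((bot_le).trans_lt (hlt d0 hd0))
    refine Or.inr ⟨hIlt η hηα, hγ0, ?_⟩
    rw [sup_iff_aux _ _ hγ0]
    intro β hβ
    obtain ⟨_, ⟨d, hdG, rfl⟩, h⟩ := exists_lt_of_lt_csSup (Set.Nonempty.image _ ⟨d0, hd0⟩) hβ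
    exact ⟨_, hm d hdG, h, hlt d hdG⟩
end
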